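/- Let n ≥ 3 and let λ be a partition of n. Then Σ_{π ∈ C_λ} occ₍₃₂₁₎(π) = |C_λ| · ( (n−2)/6 − (n−3)·X₁/(n(n−1)) + X₂/(n(n−1)) − (n−3)·X₃/(n(n−1)) + X₄/(n(n−1)) ), where occ₍₃₂₁₎(π) = #{i : 1 ≤ i ≤ n−2, π(i) > π(i+1) > π(i+2)} is the number of occurrences of the consecutive (vincular) pattern (321) in π. -/

import Mathlib

open Equiv Finset

/-- The conjugacy class of permutations of `Fin n` with cycle type `lam`
(cycle type includes fixed points as parts of size 1, via `Equiv.Perm.partition`). -/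
def conjClass (n : ℕ) (lam : n.Partition) : Finset (Equiv.Perm (Fin n)) :=
  Finset.univ.filter fun π => (Equiv.Perm.partition π).parts = lam.parts

/-!
Conjugation by the six permutations of a window of three consecutive positions preserves the
conjugacy class, so the number of `π` in the class that decrease along the window is one sixth of
the sum over `π` of the number of conjugates `σ π σ⁻¹` that decrease there. This inner number
depends only on the restriction of `π` to the window, and equals
`1 - (P₂ - Q₂) / 2 + (P₃ - Q₃) / 3`, where `P_m` and `Q_m` count the labelled `m`-tuples of window
points that `π` fixes pointwise, respectively permutes cyclically. Since the symmetric group is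
`m`-transitive, the class average of such a count is `3 (3 - 1) ⋯ / (n (n - 1) ⋯)`, with `m` factors
above and below, times the same count over all points, which is read off the cycle type.
-/

section Copies

variable {m : ℕ} {κ α : Type*} [Fintype κ] [DecidableEq α]

/-- The number of copies of the permutation `τ` in the partial map `e j ↦ x j`: injective tuples
`h` of indices along which this partial map sends `e (h i)` to `e (h (τ i))`. With `e = id`, these
are the copies of `τ` in the map `x`. -/
noncomputable def copies (τ : Perm (Fin m)) (e x : κ → α) : ℕ :=
  #{h : Fin m ↪ κ | ∀ i, x (h i) = e (h (τ i))}

/-- The excess of copies of the identity of `Fin m` over copies of the `m`-cycle. -/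
noncomputable def copiesExcess (m : ℕ) (e x : κ → α) : ℤ :=
  copies (1 : Perm (Fin m)) e x - copies (finRotate m) e x

theorem copies_eq_card_injective [DecidableEq κ] (τ : Perm (Fin m)) (e x : κ → α) :
    copies τ e x = #{h : Fin m → κ | Function.Injective h ∧ ∀ i, x (h i) = e (h (τ i))} := by
  refine card_nbij (fun h => h) (fun h hh => ?_) DFunLike.coe_injective.injOn fun h hh => ?_
  · simpa [h.injective] using hh
  · simp only [coe_filter_univ, Set.mem_ofPred_eq] at hh
    exact ⟨⟨h, hh.1⟩, by simpa using hh.2, rfl⟩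

theorem copies_eq_zero (hm : 2 ≤ m) (τ : Perm (Fin m)) {e x : κ → α}
    (hx : {j | x j ∈ Set.range e}.Subsingleton) : copies τ e x = 0 := by
  refine card_eq_zero.2 (filter_eq_empty_iff.2 fun h _ hh => ?_)
  have h_mem : ∀ i, h i ∈ {j | x j ∈ Set.range e} := fun i => ⟨_, (hh i).symm⟩
  have h_eq := h.injective (hx (h_mem ⟨0, by omega⟩) (h_mem ⟨1, by omega⟩))
  simp at h_eq

theorem copiesExcess_eq_zero (hm : 2 ≤ m) {e x : κ → α}
    (hx : {j | x j ∈ Set.range e}.Subsingleton) : copiesExcess m e x = 0 := by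
  rw [copiesExcess, copies_eq_zero hm _ hx, copies_eq_zero hm _ hx, sub_self]

end Copies

section PermutationCopies

variable {α : Type*} [Fintype α] [DecidableEq α]

theorem card_fixed_eq_count_one_parts (π : Perm α) :
    #{a | π a = a} = π.partition.parts.count 1 := by
  have h_one : 1 ∉ π.cycleType := fun h => lt_irrefl _ (Perm.one_lt_of_mem_cycleType h)
  have h_compl : ({a | π a = a} : Finset α) = π.supportᶜ := by ext; simp
  rw [h_compl, card_compl, Perm.parts_partition, Multiset.count_add, Multiset.count_replicate_self,
    Multiset.count_eq_zero_of_notMem h_one, zero_add]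

theorem copies_one_id (m : ℕ) (π : Perm α) :
    copies (1 : Perm (Fin m)) id π = (π.partition.parts.count 1).descFactorial m := by
  calc copies (1 : Perm (Fin m)) id π
      = Fintype.card {h : Fin m ↪ α // ∀ i, h i ∈ {a | π a = a}} := (Fintype.card_subtype _).symm
    _ = Fintype.card (Fin m ↪ {a | π a = a}) := Fintype.card_congr (Equiv.codRestrict _ _)
    _ = (π.partition.parts.count 1).descFactorial m := by
      rw [Fintype.card_embedding_eq, Fintype.card_fin, ← card_fixed_eq_count_one_parts,
        ← Fintype.card_subtype]
      rfl

theorem minimalPeriod_eq_orderOf_cycleOf (π : Perm α) (a : α) :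
    Function.minimalPeriod π a = orderOf (π.cycleOf a) := by
  have h_periodic : ∀ m, Function.IsPeriodicPt π m a ↔ π.cycleOf a ^ m = 1 := fun m => by
    rw [Function.IsPeriodicPt, Function.IsFixedPt, Perm.iterate_eq_pow]
    by_cases ha : π a = a
    · simp [(Perm.cycleOf_eq_one_iff π).2 ha, Perm.pow_apply_eq_self_of_apply_eq_self ha]
    · rw [(π.isCycle_cycleOf ha).pow_eq_one_iff' (x := a) (by simpa using ha),
        Perm.cycleOf_pow_apply_self]
  exact Nat.dvd_right_iff_eq.1 fun m => by
    rw [← Function.isPeriodicPt_iff_minimalPeriod_dvd, h_periodic, orderOf_dvd_iff_pow_eq_one]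

theorem minimalPeriod_eq_iff_cycleOf {k : ℕ} (hk : 2 ≤ k) (π : Perm α) (a : α) :
    Function.minimalPeriod π a = k ↔
      π.cycleOf a ∈ π.cycleFactorsFinset ∧ #(π.cycleOf a).support = k := by
  rw [minimalPeriod_eq_orderOf_cycleOf, Perm.cycleOf_mem_cycleFactorsFinset_iff, Perm.mem_support]
  by_cases ha : π a = a
  · simp only [(Perm.cycleOf_eq_one_iff π).2 ha, orderOf_one, ha, ne_eq, not_true_eq_false,
      false_and, iff_false]
    omega
  · simp [(π.isCycle_cycleOf ha).orderOf, ha]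

theorem filter_cycleOf_eq_support {π c : Perm α} (hc : c ∈ π.cycleFactorsFinset) :
    ({a | π.cycleOf a = c} : Finset α) = c.support := by
  ext a
  rw [mem_filter_univ]
  refine ⟨?_, fun ha => (Perm.cycle_is_cycleOf ha hc).symm⟩
  rintro rfl
  rw [Perm.mem_support, Perm.cycleOf_apply_self, ← Perm.mem_support]
  exact Perm.cycleOf_mem_cycleFactorsFinset_iff.1 hc

theorem count_parts_partition_eq_card {k : ℕ} (hk : 2 ≤ k) (π : Perm α) :
    π.partition.parts.count k = #{c ∈ π.cycleFactorsFinset | #c.support = k} := by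
  rw [Perm.parts_partition, Multiset.count_add, Multiset.count_replicate, if_neg (by omega),
    add_zero, Perm.cycleType_def, Multiset.count_map]
  simp only [Function.comp_apply, eq_comm (a := k)]
  rfl

theorem card_minimalPeriod_eq {k : ℕ} (hk : 0 < k) (π : Perm α) :
    #{a | Function.minimalPeriod π a = k} = k * π.partition.parts.count k := by
  obtain rfl | hk : k = 1 ∨ 2 ≤ k := by omega
  · simp only [Function.minimalPeriod_eq_one_iff_isFixedPt, Function.IsFixedPt, one_mul,
      card_fixed_eq_count_one_parts]
  simp only [minimalPeriod_eq_iff_cycleOf hk, count_parts_partition_eq_card hk]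
  rw [card_eq_sum_card_fiberwise (f := π.cycleOf) (t := {c ∈ π.cycleFactorsFinset | #c.support = k})
    (fun a ha => by simpa using ha), sum_const_nat (m := k), mul_comm]
  intro c hc
  obtain ⟨hc_factor, hc_card⟩ := mem_filter.1 hc
  have h_fiber : ∀ a, ((π.cycleOf a ∈ π.cycleFactorsFinset ∧ #(π.cycleOf a).support = k) ∧
      π.cycleOf a = c) ↔ π.cycleOf a = c := by
    intro a
    rw [and_iff_right_iff_imp]
    rintro rfl
    exact ⟨hc_factor, hc_card⟩
  rw [filter_filter, filter_congr fun a _ => h_fiber a, filter_cycleOf_eq_support hc_factor,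
    hc_card]

theorem finRotate_iterate_zero {k : ℕ} (i : Fin (k + 1)) : (finRotate (k + 1))^[i] 0 = i := by
  rw [← finCycle_eq_finRotate_iterate]
  simp

theorem minimalPeriod_finRotate (k : ℕ) :
    Function.minimalPeriod (finRotate (k + 1)) 0 = k + 1 := by
  have h_period : Function.IsPeriodicPt (finRotate (k + 1)) (k + 1) 0 := by
    have h_last := finRotate_iterate_zero (Fin.last k)
    rw [Fin.val_last] at h_last
    rw [Function.IsPeriodicPt, Function.IsFixedPt, Function.iterate_succ_apply', h_last,
      finRotate_last]
  refine le_antisymm (h_period.minimalPeriod_le k.succ_pos) (le_of_not_gt fun h_lt => ?_)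
  have h_zero := finRotate_iterate_zero ⟨_, h_lt⟩
  rw [Function.iterate_minimalPeriod, Fin.ext_iff] at h_zero
  exact (h_period.minimalPeriod_pos k.succ_pos).ne h_zero

theorem copies_finRotate_id (k : ℕ) (π : Perm α) :
    copies (finRotate (k + 1)) id π = (k + 1) * π.partition.parts.count (k + 1) := by
  rw [← card_minimalPeriod_eq (Nat.add_one_pos k)]
  have h_iterate {h : Fin (k + 1) ↪ α} (hh : ∀ i, π (h i) = h (finRotate (k + 1) i)) (j : ℕ) (i) :
     π^[j] (h i) = h ((finRotate (k + 1))^[j] i) :=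
    (Function.Semiconj.iterate_right (fun i => (hh i).symm) j i).symm
  refine card_nbij (fun h => h 0) (fun h hh => ?_) (fun h hh h' hh' h_eq => ?_) fun a ha => ?_
  · simp only [id_eq, coe_filter_univ, Set.mem_ofPred_eq] at hh ⊢
    refine (Function.minimalPeriod_eq_minimalPeriod_iff.2 fun j => ?_).trans
      (minimalPeriod_finRotate k)
    simp [Function.IsPeriodicPt, Function.IsFixedPt, h_iterate hh]
  · simp only [id_eq, coe_filter_univ, Set.mem_ofPred_eq] at hh hh'
    ext i
    rw [← finRotate_iterate_zero i, ← h_iterate hh, ← h_iterate hh']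
    exact congrArg _ h_eq
  · simp only [coe_filter_univ, Set.mem_ofPred_eq] at ha
    have h_inj : Function.Injective fun i : Fin (k + 1) => π^[i] a := fun i j hij =>
      Fin.ext (Function.iterate_injOn_Iio_minimalPeriod (i.isLt.trans_eq ha.symm)
        (j.isLt.trans_eq ha.symm) hij)
    have h_rotate (i : Fin (k + 1)) : π (π^[i] a) = π^[finRotate (k + 1) i] a := by
      have h_mod := Function.iterate_mod_minimalPeriod_eq (f := π) (x := a) (n := i + 1)
      rw [ha] at h_mod
      rw [finRotate_apply, Fin.val_add, Fin.val_one', Nat.add_mod_mod, h_mod,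
        Function.iterate_succ_apply']
    exact ⟨⟨_, h_inj⟩, by simpa using h_rotate, rfl⟩

end PermutationCopies

section Averaging

theorem sum_conj_eq_sum {G M : Type*} [Group G] [AddCommMonoid M] {C : Finset G}
    (hC : ∀ g, ∀ x ∈ C, g * x * g⁻¹ ∈ C) (g : G) (F : G → M) :
    ∑ x ∈ C, F (g * x * g⁻¹) = ∑ x ∈ C, F x :=
  sum_nbij' (fun x => g * x * g⁻¹) (fun x => g⁻¹ * x * g) (hC g)
    (fun x hx => by simpa using hC g⁻¹ x hx) (fun x _ => by group) (fun x _ => by group)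
    fun _ _ => rfl

variable {α : Type*} [DecidableEq α] {C : Finset (Perm α)}

theorem card_intertwined_eq (hC : ∀ σ, ∀ π ∈ C, σ * π * σ⁻¹ ∈ C) {m : ℕ} (τ : Perm (Fin m))
    (f g : Fin m ↪ α) :
    #{π ∈ C | ∀ i, π (f i) = f (τ i)} = #{π ∈ C | ∀ i, π (g i) = g (τ i)} := by
  have := Perm.isMultiplyPretransitive α m
  obtain ⟨σ, rfl⟩ := MulAction.exists_smul_eq (Perm α) f g
  simp only [card_filter]
  rw [← sum_conj_eq_sum hC σ fun π => if ∀ i, π ((σ • f) i) = (σ • f) (τ i) then 1 else 0]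
  simp [Function.Embedding.smul_apply]

theorem sum_copies_comp (C : Finset (Perm α)) {m : ℕ} (τ : Perm (Fin m)) {κ : Type*} [Fintype κ]
    (e : κ → α) :
    ∑ π ∈ C, copies τ e (π ∘ e) =
      ∑ h : Fin m ↪ κ, #{π ∈ C | ∀ i, π (e (h i)) = e (h (τ i))} :=
  sum_card_bipartiteAbove_eq_sum_card_bipartiteBelow _

theorem descFactorial_mul_sum_copies_comp [Fintype α] (hC : ∀ σ, ∀ π ∈ C, σ * π * σ⁻¹ ∈ C) {m : ℕ}
    (τ : Perm (Fin m)) {κ : Type*} [Fintype κ] (e : κ ↪ α) :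
    (Fintype.card α).descFactorial m * ∑ π ∈ C, copies τ e (π ∘ e) =
      (Fintype.card κ).descFactorial m * ∑ π ∈ C, copies τ id π := by
  have h_global : ∑ π ∈ C, copies τ id π =
      ∑ g : Fin m ↪ α, #{π ∈ C | ∀ i, π (g i) = g (τ i)} := sum_copies_comp C τ id
  have h_const (h : Fin m ↪ κ) (g : Fin m ↪ α) :
      #{π ∈ C | ∀ i, π (e (h i)) = e (h (τ i))} = #{π ∈ C | ∀ i, π (g i) = g (τ i)} :=
    card_intertwined_eq hC τ (h.trans e) g
  have h_card_local := Fintype.card_embedding_eq (α := Fin m) (β := κ)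
  have h_card_global := Fintype.card_embedding_eq (α := Fin m) (β := α)
  rw [Fintype.card_fin] at h_card_local h_card_global
  rw [h_global, sum_copies_comp, ← h_card_local, ← h_card_global, ← card_univ, ← card_univ,
    ← smul_eq_mul, ← smul_eq_mul, ← sum_const, ← sum_const, sum_comm]
  exact sum_congr rfl fun h _ => sum_congr rfl fun g _ => h_const h g

theorem sum_card_conj_viaFintypeEmbedding (hC : ∀ σ, ∀ π ∈ C, σ * π * σ⁻¹ ∈ C) {κ : Type*}
    [Fintype κ] [DecidableEq κ] (e : κ ↪ α) (P : (κ → α) → Prop) [DecidablePred P] :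
    ∑ π ∈ C, #{σ : Perm κ | P (σ.viaFintypeEmbedding e ∘ (π ∘ e) ∘ σ.symm)} =
      Fintype.card (Perm κ) * #{π ∈ C | P fun j => π (e j)} := by
  have h_conj (σ : Perm κ) (π : Perm α) : ⇑(σ.viaFintypeEmbedding e * π *
      (σ.viaFintypeEmbedding e)⁻¹) ∘ e =
      σ.viaFintypeEmbedding e ∘ (fun j => π (e j)) ∘ σ.symm := by
    ext j
    have h_inv : (σ.viaFintypeEmbedding e)⁻¹ (e j) = e (σ.symm j) := by
      rw [Perm.inv_eq_iff_eq, Perm.viaFintypeEmbedding_apply_image, apply_symm_apply]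
    simp only [Function.comp_apply, Perm.mul_apply, h_inv]
  have h_const (σ : Perm κ) :
      #{π ∈ C | P (σ.viaFintypeEmbedding e ∘ (fun j => π (e j)) ∘ σ.symm)} =
        #{π ∈ C | P fun j => π (e j)} := by
    simp only [card_filter, ← h_conj]
    exact sum_conj_eq_sum hC _ fun π => if P fun j => π (e j) then 1 else 0
  calc _ = ∑ σ : Perm κ, #{π ∈ C | P (σ.viaFintypeEmbedding e ∘ (fun j => π (e j)) ∘ σ.symm)} :=
        sum_card_bipartiteAbove_eq_sum_card_bipartiteBelow _
    _ = _ := by simp only [h_const, sum_const, card_univ, smul_eq_mul]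

end Averaging

section StrictAnti

theorem strictAnti_monotone_comp_iff {α β γ : Type*} [PartialOrder α] [LinearOrder β]
    [PartialOrder γ] {g : β → γ} {f : α → β} (hg : Monotone g)
    (h_inj : Function.Injective (g ∘ f)) :
    StrictAnti (g ∘ f) ↔ StrictAnti f :=
  ⟨fun h _ _ hab => hg.reflect_lt (h hab),
    fun h => (hg.comp_antitone h.antitone).strictAnti_of_injective h_inj⟩

theorem card_strictAnti_comp_symm_eq_one {k : ℕ} {α : Type*} [LinearOrder α]
    {x : Fin k → α} (hx : Function.Injective x) :
    #{σ : Perm (Fin k) | StrictAnti (x ∘ σ.symm)} = 1 := by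
  have h_iff (σ : Perm (Fin k)) :
      StrictAnti (x ∘ σ.symm) ↔ Monotone ((OrderDual.toDual ∘ x) ∘ σ.symm) :=
    ⟨fun h => h.antitone.dual_right,
      fun h => h.dual_right.strictAnti_of_injective (hx.comp σ.symm.injective)⟩
  refine card_eq_one.2 ⟨(Tuple.sort (OrderDual.toDual ∘ x)).symm, eq_singleton_iff_unique_mem.2
    ⟨?_, fun σ hσ => ?_⟩⟩
  · rw [mem_filter_univ, h_iff]
    exact Tuple.monotone_sort _
  · rw [mem_filter_univ, h_iff] at hσ
    have h_comp := Tuple.unique_monotone hσ (Tuple.monotone_sort (OrderDual.toDual ∘ x))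
    have h_symm : σ.symm = Tuple.sort (OrderDual.toDual ∘ x) :=
      Equiv.ext fun j => hx (congrFun h_comp j)
    rw [← h_symm, symm_symm]

theorem strictAnti_fin_three_iff {α : Type*} [Preorder α] {x : Fin 3 → α} :
    StrictAnti x ↔ x 1 < x 0 ∧ x 2 < x 1 := by
  rw [Fin.strictAnti_iff_succ_lt, Fin.forall_fin_two]
  rfl

end StrictAnti

section Window

variable {k n : ℕ} (i : Fin (n + 1 - k))

/-- The `k` consecutive points `i, …, i + k - 1` of `Fin n`; the type of `i` lists the possible
starting points. -/
def window : Fin k ↪ Fin n where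
  toFun j := ⟨i + j, by omega⟩
  inj' j j' h := by simpa [Fin.ext_iff] using h

/-- The points `1, …, k` of `Fin (k + 2)`, a window with one extra point on either side. -/
def innerWindow (k : ℕ) : Fin k ↪ Fin (k + 2) :=
  window ⟨1, by omega⟩

/-- The monotone map that sends `window i` onto `innerWindow k`, everything below to `0` and
everything above to `k + 1`; the lower bound `0` is enforced by truncated subtraction. -/
def clamp (t : Fin n) : Fin (k + 2) :=
  ⟨min (t + 1 - i) (k + 1), by omega⟩

theorem val_window (j : Fin k) : (window i j : ℕ) = i + j := rfl

theorem mem_range_window_iff {t : Fin n} :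
    t ∈ Set.range (window i) ↔ (i : ℕ) ≤ t ∧ (t : ℕ) < i + k := by
  constructor
  · rintro ⟨j, rfl⟩
    rw [val_window]
    omega
  · rintro ⟨h_le, h_lt⟩
    exact ⟨⟨t - i, by omega⟩, Fin.ext (by rw [val_window]; exact Nat.add_sub_of_le h_le)⟩

theorem clamp_monotone : Monotone (clamp i) := fun s t (h_le : (s : ℕ) ≤ t) =>
  Fin.mk_le_mk.2 (by omega)

variable {i}

theorem clamp_eq_innerWindow_iff {t : Fin n} {j : Fin k} :
    clamp i t = innerWindow k j ↔ t = window i j := by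
  simp only [clamp, innerWindow, val_window, Fin.ext_iff]
  omega

theorem clamp_viaFintypeEmbedding (σ : Perm (Fin k)) (t : Fin n) :
    clamp i (σ.viaFintypeEmbedding (window i) t) =
      σ.viaFintypeEmbedding (innerWindow k) (clamp i t) := by
  by_cases ht : t ∈ Set.range (window i)
  · obtain ⟨j, rfl⟩ := ht
    rw [Perm.viaFintypeEmbedding_apply_image, clamp_eq_innerWindow_iff.2 rfl,
      clamp_eq_innerWindow_iff.2 rfl, Perm.viaFintypeEmbedding_apply_image]
  · have h_clamp : clamp i t ∉ Set.range (innerWindow k) := fun ⟨j, hj⟩ =>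
      ht ⟨j, (clamp_eq_innerWindow_iff.1 hj.symm).symm⟩
    rw [Perm.viaFintypeEmbedding_apply_notMem_range _ _ ht,
      Perm.viaFintypeEmbedding_apply_notMem_range _ _ h_clamp]

theorem copiesExcess_clamp_comp (m : ℕ) (x : Fin k → Fin n) :
    copiesExcess m (innerWindow k) (clamp i ∘ x) = copiesExcess m (window i) x := by
  simp only [copiesExcess, copies, Function.comp_apply, clamp_eq_innerWindow_iff]

theorem card_strictAnti_clamp_comp {x : Fin k → Fin n} (hx : Function.Injective (clamp i ∘ x)) :
    #{σ : Perm (Fin k) |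
        StrictAnti (σ.viaFintypeEmbedding (innerWindow k) ∘ (clamp i ∘ x) ∘ σ.symm)} =
      #{σ : Perm (Fin k) | StrictAnti (σ.viaFintypeEmbedding (window i) ∘ x ∘ σ.symm)} := by
  refine congrArg card (filter_congr fun σ _ => ?_)
  have h_clamp : clamp i ∘ σ.viaFintypeEmbedding (window i) ∘ x ∘ σ.symm =
      σ.viaFintypeEmbedding (innerWindow k) ∘ (clamp i ∘ x) ∘ σ.symm :=
    funext fun j => clamp_viaFintypeEmbedding σ _
  rw [← h_clamp]
  refine strictAnti_monotone_comp_iff (clamp_monotone i) ?_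
  rw [h_clamp]
  exact (Equiv.injective _).comp (hx.comp σ.symm.injective)

theorem viaFintypeEmbedding_window_lt_iff (σ : Perm (Fin k)) {s t : Fin n}
    (h : ¬ (s ∈ Set.range (window i) ∧ t ∈ Set.range (window i))) :
    σ.viaFintypeEmbedding (window i) s < σ.viaFintypeEmbedding (window i) t ↔ s < t := by
  have h_cases (u : Fin n) : σ.viaFintypeEmbedding (window i) u = u ∨
      u ∈ Set.range (window i) ∧ σ.viaFintypeEmbedding (window i) u ∈ Set.range (window i) := by
    by_cases hu : u ∈ Set.range (window i)
    · obtain ⟨j, rfl⟩ := hu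
      exact .inr ⟨⟨j, rfl⟩, σ j, (Perm.viaFintypeEmbedding_apply_image ..).symm⟩
    · exact .inl (Perm.viaFintypeEmbedding_apply_notMem_range _ _ hu)
  have hs := h_cases s
  have ht := h_cases t
  simp only [mem_range_window_iff, Fin.ext_iff, Fin.lt_def] at h hs ht ⊢
  omega

theorem strictAnti_viaFintypeEmbedding_window_comp_iff (σ : Perm (Fin k)) {x : Fin k → Fin n}
    (hx : {j | x j ∈ Set.range (window i)}.Subsingleton) :
    StrictAnti (σ.viaFintypeEmbedding (window i) ∘ x ∘ σ.symm) ↔ StrictAnti (x ∘ σ.symm) :=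
  forall₂_congr fun _ _ => forall_congr' fun hab =>
    viaFintypeEmbedding_window_lt_iff σ fun h => hab.ne' (σ.symm.injective (hx h.1 h.2))

end Window

section TripleWindow

-- The left side sees a value outside the window only through its order relative to the other
-- values, so `clamp` reduces the general window to this check of sixty injective maps, unless two
-- values lie on the same side of the window; then no copies occur and both sides equal `6`.
theorem six_mul_card_strictAnti_conj_innerWindow : ∀ x : Fin 3 → Fin 5, Function.Injective x →
    (6 * #{σ : Perm (Fin 3) |
        StrictAnti (σ.viaFintypeEmbedding (innerWindow 3) ∘ x ∘ σ.symm)} : ℤ) =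
      6 - 3 * copiesExcess 2 (innerWindow 3) x + 2 * copiesExcess 3 (innerWindow 3) x := by
  simp only [copiesExcess, copies_eq_card_injective]
  decide +kernel

variable {n : ℕ} (i : Fin (n + 1 - 3))

theorem subsingleton_preimage_window_of_not_injective_clamp {x : Fin 3 → Fin n}
    (hx : Function.Injective x)
    (h_clamp : ¬ Function.Injective (clamp i ∘ x)) :
    {j | x j ∈ Set.range (window i)}.Subsingleton := by
  obtain ⟨a, b, h_eq, h_ne⟩ := Function.not_injective_iff.1 h_clamp
  have h_outside {c d : Fin 3} (h_eq : clamp i (x c) = clamp i (x d)) (h_ne : c ≠ d) :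
      x c ∉ Set.range (window i) := by
    rintro ⟨j, hj⟩
    have h_c := clamp_eq_innerWindow_iff.2 hj.symm
    exact h_ne (hx (hj.symm.trans (clamp_eq_innerWindow_iff.1 (h_eq ▸ h_c)).symm))
  intro j hj j' hj'
  have h_a := h_outside h_eq h_ne
  have h_b := h_outside h_eq.symm h_ne.symm
  have h_ja : j ≠ a := by rintro rfl; exact h_a hj
  have h_jb : j ≠ b := by rintro rfl; exact h_b hj
  have h_ja' : j' ≠ a := by rintro rfl; exact h_a hj'
  have h_jb' : j' ≠ b := by rintro rfl; exact h_b hj'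
  omega

theorem six_mul_card_strictAnti_conj_window {x : Fin 3 → Fin n} (hx : Function.Injective x) :
    (6 * #{σ : Perm (Fin 3) |
        StrictAnti (σ.viaFintypeEmbedding (window i) ∘ x ∘ σ.symm)} : ℤ) =
      6 - 3 * copiesExcess 2 (window i) x + 2 * copiesExcess 3 (window i) x := by
  by_cases h_clamp : Function.Injective (clamp i ∘ x)
  · simpa only [copiesExcess_clamp_comp, card_strictAnti_clamp_comp h_clamp] using
      six_mul_card_strictAnti_conj_innerWindow _ h_clamp
  · have h_sub := subsingleton_preimage_window_of_not_injective_clamp i hx h_clamp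
    simp only [strictAnti_viaFintypeEmbedding_window_comp_iff _ h_sub,
      card_strictAnti_comp_symm_eq_one hx, copiesExcess_eq_zero le_rfl h_sub,
      copiesExcess_eq_zero (Nat.le_succ 2) h_sub]
    norm_num

theorem card_consecutive_descents_eq_card_window {α : Type*} [Preorder α] [DecidableLT α]
    (x : Fin n → α) :
    #{t : Fin n × Fin n × Fin n | (t.1 : ℕ) + 1 = (t.2.1 : ℕ) ∧ (t.2.1 : ℕ) + 1 = (t.2.2 : ℕ) ∧
        x t.2.1 < x t.1 ∧ x t.2.2 < x t.2.1} =
      #{i : Fin (n + 1 - 3) | StrictAnti (x ∘ window i)} := by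
  symm
  refine card_nbij (fun i => (window i 0, window i 1, window i 2)) (fun i hi => ?_)
    (fun i _ i' _ h_eq => ?_) fun t ht => ?_
  · simpa [strictAnti_fin_three_iff, val_window, add_assoc] using hi
  · simpa [Fin.ext_iff, val_window] using h_eq
  · obtain ⟨a, b, c⟩ := t
    simp only [coe_filter_univ, Set.mem_ofPred_eq] at ht
    obtain ⟨h_ab, h_bc, h_ba, h_cb⟩ := ht
    have h_lt : (a : ℕ) < n + 1 - 3 := by omega
    have h_a : window (k := 3) ⟨a, h_lt⟩ 0 = a := rfl
    have h_b : window (k := 3) ⟨a, h_lt⟩ 1 = b := Fin.ext h_ab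
    have h_c : window (k := 3) ⟨a, h_lt⟩ 2 = c := Fin.ext (by rw [← h_bc, ← h_ab]; rfl)
    refine ⟨⟨a, h_lt⟩, ?_, by simp only [h_a, h_b, h_c]⟩
    simp only [coe_filter_univ, Set.mem_ofPred_eq, strictAnti_fin_three_iff, Function.comp_apply,
      h_a, h_b, h_c]
    exact ⟨h_ba, h_cb⟩

theorem thirtySix_mul_card_strictAnti_window {C : Finset (Perm (Fin n))}
    (hC : ∀ σ, ∀ π ∈ C, σ * π * σ⁻¹ ∈ C) :
    (36 * #{π ∈ C | StrictAnti fun j => π (window i j)} : ℤ) =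
      6 * #C - 3 * ∑ π ∈ C, copiesExcess 2 (window i) (π ∘ window i) +
        2 * ∑ π ∈ C, copiesExcess 3 (window i) (π ∘ window i) := by
  have h_conj := sum_card_conj_viaFintypeEmbedding hC (window i) StrictAnti
  rw [Fintype.card_perm, Fintype.card_fin] at h_conj
  have h_window := sum_congr (rfl : C = C) fun π _ =>
    six_mul_card_strictAnti_conj_window i (π.injective.comp (window i).injective)
  simp only [sum_add_distrib, sum_sub_distrib, sum_const, ← mul_sum, nsmul_eq_mul] at h_window
  rw [← Nat.cast_sum, h_conj] at h_window
  push_cast [Nat.factorial] at h_window ⊢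
  linarith

end TripleWindow

section ConjugacyClass

theorem cast_descFactorial_three {R : Type*} [CommRing R] (a : ℕ) :
    (a.descFactorial 3 : R) = a * (a - 1) * (a - 2) := by
  obtain h_lt | h_le := lt_or_ge a 2
  · interval_cases a <;> simp
  · rw [Nat.descFactorial_succ, Nat.cast_mul, Nat.cast_descFactorial_two, Nat.cast_sub h_le,
      Nat.cast_ofNat]
    ring

variable {n : ℕ} (lam : n.Partition)

theorem conj_mem_conjClass (σ : Perm (Fin n)) :
    ∀ π ∈ conjClass n lam, σ * π * σ⁻¹ ∈ conjClass n lam := by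
  intro π hπ
  simp only [conjClass, mem_filter_univ] at hπ ⊢
  have h_isConj : IsConj π (σ * π * σ⁻¹) := isConj_iff.2 ⟨σ, rfl⟩
  rw [← Perm.partition_eq_of_isConj.1 h_isConj, hπ]

theorem descFactorial_mul_sum_conjClass_copiesExcess {m : ℕ} (hm : 0 < m) {κ : Type*} [Fintype κ]
    (e : κ ↪ Fin n) :
    n.descFactorial m * ∑ π ∈ conjClass n lam, copiesExcess m e (π ∘ e) =
      (Fintype.card κ).descFactorial m * (#(conjClass n lam) *
        ((lam.parts.count 1).descFactorial m - m * lam.parts.count m)) := by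
  obtain ⟨k, rfl⟩ := Nat.exists_eq_add_one.2 hm
  have h_copies {c : ℕ} (τ : Perm (Fin (k + 1))) (hc : ∀ π ∈ conjClass n lam, copies τ id π = c) :
      (n.descFactorial (k + 1) * ∑ π ∈ conjClass n lam, (copies τ e (π ∘ e) : ℤ)) =
        (Fintype.card κ).descFactorial (k + 1) * (#(conjClass n lam) * c) := by
    have h_comp := descFactorial_mul_sum_copies_comp (conj_mem_conjClass lam) τ e
    rw [sum_const_nat hc, Fintype.card_fin] at h_comp
    exact_mod_cast h_comp
  have h_one := h_copies 1 fun π hπ => by rw [copies_one_id, (mem_filter.1 hπ).2]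
  have h_rotate := h_copies (finRotate (k + 1)) fun π hπ => by
    rw [copies_finRotate_id, (mem_filter.1 hπ).2]
  simp only [copiesExcess, sum_sub_distrib]
  push_cast at h_rotate ⊢
  linear_combination h_one - h_rotate

theorem six_mul_card_conjClass_strictAnti (i : Fin (n + 1 - 3)) {p q r : ℚ}
    (hp : p = lam.parts.count 1) (hq : q = lam.parts.count 2) (hr : r = lam.parts.count 3) :
    (6 * #{π ∈ conjClass n lam | StrictAnti fun j => π (window i j)} : ℚ) =
      #(conjClass n lam) * (1 - 3 * (p * (p - 1) - 2 * q) / (n * (n - 1)) +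
        2 * (p * (p - 1) * (p - 2) - 3 * r) / (n * (n - 1) * (n - 2))) := by
  have h_average := thirtySix_mul_card_strictAnti_window i (conj_mem_conjClass lam)
  have h_two := descFactorial_mul_sum_conjClass_copiesExcess lam two_pos (window i)
  have h_three := descFactorial_mul_sum_conjClass_copiesExcess lam three_pos (window i)
  have h_six : Nat.descFactorial 3 2 = 6 ∧ Nat.descFactorial 3 3 = 6 := ⟨rfl, rfl⟩
  simp only [Fintype.card_fin, h_six] at h_two h_three
  generalize ∑ π ∈ conjClass n lam, copiesExcess 2 (window i) (π ∘ window i) = excess₂ at *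
  generalize ∑ π ∈ conjClass n lam, copiesExcess 3 (window i) (π ∘ window i) = excess₃ at *
  qify at h_average h_two h_three
  rw [Nat.cast_descFactorial_two, Nat.cast_descFactorial_two, ← hp, ← hq] at h_two
  rw [cast_descFactorial_three, cast_descFactorial_three, ← hp, ← hr] at h_three
  have h_n : (3 : ℚ) ≤ n := by have := i.isLt; exact_mod_cast (by omega : 3 ≤ n)
  have h_n₀ : (n : ℚ) ≠ 0 := by linarith
  have h_n₁ : (n : ℚ) - 1 ≠ 0 := by linarith
  have h_n₂ : (n : ℚ) - 2 ≠ 0 := by linarith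
  field_simp
  linear_combination n * (n - 1) * (n - 2) / 6 * h_average - (n - 2) / 2 * h_two + h_three / 3

end ConjugacyClass

theorem stmt12 (n : ℕ) (hn : 3 ≤ n) (lam : n.Partition)
    (p q r X₁ X₂ X₃ X₄ : ℚ)
    (hp : p = (lam.parts.count 1 : ℚ)) (hq : q = (lam.parts.count 2 : ℚ))
    (hr : r = (lam.parts.count 3 : ℚ))
    (hX1 : X₁ = p - 1) (hX2 : X₂ = (p - 1) * (p - 2) / 2 + q - 1)
    (hX3 : X₃ = (p - 1) * (p - 2) / 2 - q)
    (hX4 : X₄ = (p - 1) * (p - 2) * (p - 3) / 3 - p - r + 2) :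
    (∑ π ∈ conjClass n lam,
      ((((Finset.univ : Finset (Fin n × Fin n × Fin n)).filter fun x =>
          (x.1 : ℕ) + 1 = (x.2.1 : ℕ) ∧ (x.2.1 : ℕ) + 1 = (x.2.2 : ℕ) ∧ π x.2.1 < π x.1 ∧ π x.2.2 < π x.2.1).card : ℚ)))
    = ((conjClass n lam).card : ℚ) *
      (((n : ℚ) - 2) / 6 - ((n : ℚ) - 3) * X₁ / ((n : ℚ) * ((n : ℚ) - 1))
        + X₂ / ((n : ℚ) * ((n : ℚ) - 1))
        - ((n : ℚ) - 3) * X₃ / ((n : ℚ) * ((n : ℚ) - 1))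
        + X₄ / ((n : ℚ) * ((n : ℚ) - 1))) := by
  have h_swap : ∑ π ∈ conjClass n lam, #{i | StrictAnti (π ∘ window i)} =
      ∑ i : Fin (n + 1 - 3), #{π ∈ conjClass n lam | StrictAnti fun j => π (window i j)} :=
    sum_card_bipartiteAbove_eq_sum_card_bipartiteBelow _
  have h_sum := sum_congr rfl fun i (_ : i ∈ (univ : Finset (Fin (n + 1 - 3)))) =>
    six_mul_card_conjClass_strictAnti lam i hp hq hr
  have h_windows : ((n + 1 - 3 : ℕ) : ℚ) = n - 2 := by
    rw [Nat.cast_sub (by omega)]; push_cast; ring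
  rw [← mul_sum, sum_const, card_univ, Fintype.card_fin, nsmul_eq_mul, h_windows, ← Nat.cast_sum,
    ← h_swap] at h_sum
  simp only [card_consecutive_descents_eq_card_window, ← Nat.cast_sum]
  have h_n : (3 : ℚ) ≤ n := by exact_mod_cast hn
  have h_n₀ : (n : ℚ) ≠ 0 := by linarith
  have h_n₁ : (n : ℚ) - 1 ≠ 0 := by linarith
  have h_n₂ : (n : ℚ) - 2 ≠ 0 := by linarith
  refine mul_left_cancel₀ (by norm_num : (6 : ℚ) ≠ 0) (h_sum.trans ?_)
  rw [hX1, hX2, hX3, hX4]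
  field_simp
  ring
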